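/- arXiv:1612.09245 — 2 statements merged into one kernel-verified Lean document; each statement's English description precedes it below -/
import Mathlib

section
/- Let n ≥ 3, q > 2/(n-2), 0 ≤ s < 1, q + s < n/(n-2), and let Γ(x) = ((n-2)ω_{n-1})^{-1}|x|^{2-n}. Then for every ω on the unit sphere in ℝⁿ, ∫_{ℝⁿ} Γ(ω - y) |y|^{(2s - q(n-2))/(1-s)} dy = (1-s)² / (((n-2)q - 2)(n - (n-2)(q+s))). -/
open MeasureTheory Set

theorem gam_aux (A r c : ℝ) (hA : 0 < A) (hr : 0 < r) (hc : 0 ≤ c) :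
    ∫⁻ u in Ioi (0:ℝ), ENNReal.ofReal (c * (u ^ (A - 1) * Real.exp (-(r * u)))) =
      ENNReal.ofReal (c * ((1 / r) ^ A * Real.Gamma A)) := by
  have h := Real.integral_rpow_mul_exp_neg_mul_Ioi hA hr
  have hpos : 0 < (1 / r) ^ A * Real.Gamma A :=
    mul_pos (Real.rpow_pos_of_pos (by positivity) _) (Real.Gamma_pos_of_pos hA)
  have hi : Integrable (fun u : ℝ => u ^ (A - 1) * Real.exp (-(r * u)))
      (volume.restrict (Ioi 0)) := by
    apply Integrable.of_integral_ne_zero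
    rw [h]; exact hpos.ne'
  rw [← h, ← integral_const_mul, ofReal_integral_eq_lintegral_ofReal (hi.const_mul c)]
  filter_upwards [ae_restrict_mem measurableSet_Ioi] with u hu
  have : 0 < u := hu
  simp only [Pi.zero_apply]
  positivity

theorem gauss_aux (n : ℕ) (b c : ℝ) (hb : 0 < b) (hc : 0 ≤ c) (z : EuclideanSpace ℝ (Fin n)) :
    ∫⁻ y : EuclideanSpace ℝ (Fin n), ENNReal.ofReal (c * Real.exp (-b * ‖y - z‖ ^ 2)) =
      ENNReal.ofReal (c * (Real.pi / b) ^ ((n : ℝ) / 2)) := by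
  rw [lintegral_sub_right_eq_self
    (fun y : EuclideanSpace ℝ (Fin n) => ENNReal.ofReal (c * Real.exp (-b * ‖y‖ ^ 2))) z]
  have h := GaussianFourier.integral_rexp_neg_mul_sq_norm (V := EuclideanSpace ℝ (Fin n)) hb
  rw [finrank_euclideanSpace_fin] at h
  have hpos : 0 < (Real.pi / b) ^ ((n : ℝ) / 2) :=
    Real.rpow_pos_of_pos (div_pos Real.pi_pos hb) _
  have hi : Integrable (fun y : EuclideanSpace ℝ (Fin n) => Real.exp (-b * ‖y‖ ^ 2)) := by
    apply Integrable.of_integral_ne_zero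
    rw [h]; exact hpos.ne'
  rw [← h, ← integral_const_mul, ofReal_integral_eq_lintegral_ofReal (hi.const_mul c)]
  filter_upwards with u
  simp only [Pi.zero_apply]
  positivity

theorem square_aux (n : ℕ) (u w : ℝ) (hw : 0 < w) (ω y : EuclideanSpace ℝ (Fin n))
    (hω : ‖ω‖ = 1) :
    u * ‖ω - y‖ ^ 2 + u * w * ‖y‖ ^ 2 =
      u * (1 + w) * ‖y - (1 / (1 + w)) • ω‖ ^ 2 + u * (w / (1 + w)) := by
  rw [norm_sub_sq_real, norm_sub_sq_real, inner_smul_right, norm_smul, hω, real_inner_comm ω y]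
  have : (1 + w) ≠ 0 := by positivity
  rw [mul_pow, Real.norm_eq_abs, sq_abs]
  field_simp
  ring

theorem tail_aux (e c : ℝ) (he : e < -1) (hc : 0 ≤ c) :
    ∫⁻ w in Ioi (0:ℝ), ENNReal.ofReal (c * (1 + w) ^ e) = ENNReal.ofReal (c * (-1 / (e + 1))) := by
  have h1 : ∫ w in Ioi (0:ℝ), (1 + w) ^ e = -1 / (e + 1) := by
    have hm := (measurePreserving_add_left (volume : Measure ℝ) 1).setIntegral_preimage_emb
      (measurableEmbedding_addLeft (1:ℝ)) (fun x : ℝ => x ^ e) (Ioi 1)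
    have hpre : (fun x : ℝ => 1 + x) ⁻¹' Ioi 1 = Ioi 0 := by
      ext x; simp
    rw [hpre] at hm
    rw [hm, integral_Ioi_rpow_of_lt he one_pos, Real.one_rpow]
  have hne : -1 / (e + 1) ≠ 0 := div_ne_zero (by norm_num) (by linarith)
  have hi : Integrable (fun w : ℝ => (1 + w) ^ e) (volume.restrict (Ioi 0)) := by
    apply Integrable.of_integral_ne_zero
    rw [h1]; exact hne
  rw [← h1, ← integral_const_mul, ofReal_integral_eq_lintegral_ofReal (hi.const_mul c)]
  filter_upwards [ae_restrict_mem measurableSet_Ioi] with u hu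
  have : 0 < u := hu
  simp only [Pi.zero_apply]
  positivity

theorem main_aux (n : ℕ) (hn : 3 ≤ n) (B : ℝ) (hB1 : 1 < B) (hB2 : B < (n : ℝ) / 2)
    (ω : EuclideanSpace ℝ (Fin n)) (hω : ‖ω‖ = 1) :
    ∫⁻ y, ENNReal.ofReal (Real.Gamma ((n : ℝ) / 2 - 1) * Real.Gamma B *
        (‖ω - y‖ ^ (2 - (n : ℝ)) * ‖y‖ ^ (-2 * B))) =
      ENNReal.ofReal (Real.pi ^ ((n : ℝ) / 2) * Real.Gamma (B - 1) * (1 / ((n : ℝ) / 2 - B))) := by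
  have hn' : (3 : ℝ) ≤ n := by exact_mod_cast hn
  have : Nontrivial (EuclideanSpace ℝ (Fin n)) :=
    ⟨ω, 0, fun h => by rw [h, norm_zero] at hω; norm_num at hω⟩
  set A : ℝ := (n : ℝ) / 2 - 1 with hA
  have hA0 : 0 < A := by rw [hA]; linarith
  have hGA := Real.Gamma_pos_of_pos hA0
  have hGB := Real.Gamma_pos_of_pos (show 0 < B by linarith)
  have hGB1 := Real.Gamma_pos_of_pos (show 0 < B - 1 by linarith)
  let F : EuclideanSpace ℝ (Fin n) → ℝ → ℝ → ENNReal := fun y u w =>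
    ENNReal.ofReal (u ^ (A + B - 1) * w ^ (B - 1) *
      Real.exp (-(u * ‖ω - y‖ ^ 2 + u * w * ‖y‖ ^ 2)))
  have hF : Measurable (fun p : EuclideanSpace ℝ (Fin n) × ℝ × ℝ => F p.1 p.2.1 p.2.2) := by
    fun_prop
  have step1 : ∀ᵐ y : EuclideanSpace ℝ (Fin n),
      ENNReal.ofReal (Real.Gamma A * Real.Gamma B *
        (‖ω - y‖ ^ (2 - (n : ℝ)) * ‖y‖ ^ (-2 * B))) =
      ∫⁻ u in Ioi (0:ℝ), ∫⁻ w in Ioi (0:ℝ), F y u w := by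
    filter_upwards [compl_mem_ae_iff.2 (measure_singleton (μ := volume) ω),
      compl_mem_ae_iff.2 (measure_singleton (μ := volume) (0 : EuclideanSpace ℝ (Fin n)))] with y h1 h2
    have hy1 : 0 < ‖ω - y‖ := norm_pos_iff.2 (sub_ne_zero.2 (fun h => h1 h.symm))
    have hy2 : 0 < ‖y‖ := norm_pos_iff.2 h2
    have e1 : ∀ u ∈ Ioi (0:ℝ), ∫⁻ w in Ioi (0:ℝ), F y u w =
        ENNReal.ofReal ((Real.Gamma B * ‖y‖ ^ (-2 * B)) *
          (u ^ (A - 1) * Real.exp (-(‖ω - y‖ ^ 2 * u)))) := by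
      intro u hu
      have hu : 0 < u := hu
      have := gam_aux B (u * ‖y‖ ^ 2) (u ^ (A + B - 1) * Real.exp (-(u * ‖ω - y‖ ^ 2)))
        (by linarith) (by positivity) (by positivity)
      convert this using 2
      · ext w
        simp only [F]
        congr 1
        rw [neg_add, Real.exp_add]
        ring_nf
      · rw [one_div, Real.inv_rpow (by positivity), Real.mul_rpow hu.le (by positivity),
          ← Real.rpow_natCast ‖y‖ 2, ← Real.rpow_mul hy2.le, mul_inv, ← Real.rpow_neg hu.le,
          ← Real.rpow_neg hy2.le, show A + B - 1 = (A - 1) + B by ring, Real.rpow_add hu,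
          Real.rpow_neg hu.le B]
        have : u ^ B ≠ 0 := (Real.rpow_pos_of_pos hu _).ne'
        field_simp
        push_cast
        ring_nf
    rw [setLIntegral_congr_fun measurableSet_Ioi e1,
      gam_aux A (‖ω - y‖ ^ 2) _ hA0 (by positivity) (by positivity)]
    congr 1
    rw [one_div, Real.inv_rpow (by positivity), ← Real.rpow_natCast, ← Real.rpow_mul hy1.le,
      ← Real.rpow_neg hy1.le, show -(((2:ℕ):ℝ) * A) = 2 - n by rw [hA]; push_cast; ring]
    ring
  have step2 : ∀ u ∈ Ioi (0:ℝ), ∀ w ∈ Ioi (0:ℝ), ∫⁻ y, F y u w =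
      ENNReal.ofReal ((Real.pi ^ ((n : ℝ) / 2) * w ^ (B - 1) * (1 + w) ^ (-((n : ℝ) / 2))) *
        (u ^ (B - 1 - 1) * Real.exp (-(w / (1 + w) * u)))) := by
    intro u hu w hw
    have hu : 0 < u := hu
    have hw : 0 < w := hw
    have := gauss_aux n (u * (1 + w))
      (u ^ (A + B - 1) * w ^ (B - 1) * Real.exp (-(u * (w / (1 + w))))) (by positivity)
      (by positivity) ((1 / (1 + w)) • ω)
    convert this using 2
    · ext y
      simp only [F]
      rw [square_aux n u w hw ω y hω, neg_add, Real.exp_add]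
      ring_nf
    · rw [Real.div_rpow Real.pi_pos.le (by positivity), Real.mul_rpow hu.le (by positivity),
        Real.rpow_neg (by positivity), show A + B - 1 = (B - 1 - 1) + (n : ℝ) / 2 by rw [hA]; ring,
        Real.rpow_add hu]
      have : u ^ ((n : ℝ) / 2) ≠ 0 := (Real.rpow_pos_of_pos hu _).ne'
      have : (1 + w) ^ ((n : ℝ) / 2) ≠ 0 := (Real.rpow_pos_of_pos (by positivity) _).ne'
      field_simp
  have step3 : ∀ w ∈ Ioi (0:ℝ), ∫⁻ u in Ioi (0:ℝ), ∫⁻ y, F y u w =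
      ENNReal.ofReal ((Real.pi ^ ((n : ℝ) / 2) * Real.Gamma (B - 1)) *
        (1 + w) ^ (B - 1 - (n : ℝ) / 2)) := by
    intro w hw
    have hw' : 0 < w := hw
    rw [setLIntegral_congr_fun measurableSet_Ioi (fun u hu => step2 u hu w hw),
      gam_aux (B - 1) (w / (1 + w)) _ (by linarith) (by positivity) (by positivity)]
    congr 1
    rw [one_div, inv_div, Real.div_rpow (by positivity) hw'.le,
      show B - 1 - (n : ℝ) / 2 = (B - 1) + -((n : ℝ) / 2) by ring,
      Real.rpow_add (show 0 < 1 + w by positivity)]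
    have : w ^ (B - 1) ≠ 0 := (Real.rpow_pos_of_pos hw' _).ne'
    field_simp
  rw [lintegral_congr_ae step1]
  calc ∫⁻ y, ∫⁻ u in Ioi (0:ℝ), ∫⁻ w in Ioi (0:ℝ), F y u w
      = ∫⁻ u in Ioi (0:ℝ), ∫⁻ y, ∫⁻ w in Ioi (0:ℝ), F y u w := by
        apply lintegral_lintegral_swap
        apply Measurable.aemeasurable
        refine Measurable.lintegral_prod_right'
          (f := fun p : (EuclideanSpace ℝ (Fin n) × ℝ) × ℝ => F p.1.1 p.1.2 p.2) ?_
        fun_prop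
    _ = ∫⁻ u in Ioi (0:ℝ), ∫⁻ w in Ioi (0:ℝ), ∫⁻ y, F y u w := by
        congr 1
        ext u
        apply lintegral_lintegral_swap
        apply Measurable.aemeasurable
        fun_prop
    _ = ∫⁻ w in Ioi (0:ℝ), ∫⁻ u in Ioi (0:ℝ), ∫⁻ y, F y u w := by
        apply lintegral_lintegral_swap
        apply Measurable.aemeasurable
        refine Measurable.lintegral_prod_right'
          (f := fun p : (ℝ × ℝ) × EuclideanSpace ℝ (Fin n) => F p.2 p.1.1 p.1.2) ?_
        fun_prop
    _ = _ := by
        rw [setLIntegral_congr_fun measurableSet_Ioi step3,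
          tail_aux _ _ (by linarith) (by positivity)]
        congr 2
        rw [show B - 1 - (n : ℝ) / 2 + 1 = -((n : ℝ) / 2 - B) by ring, neg_div_neg_eq]

theorem stmt_14 (n : ℕ) (hn : 3 ≤ n) (q s : ℝ)
    (hq : 2 / ((n : ℝ) - 2) < q) (hs0 : 0 ≤ s) (hs1 : s < 1)
    (hqs : q + s < (n : ℝ) / (n - 2))
    (ω' : ℝ)
    (hω' : ω' = n * (volume (Metric.ball (0 : EuclideanSpace ℝ (Fin n)) 1)).toReal)
    (Γ : EuclideanSpace ℝ (Fin n) → ℝ)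
    (hΓ : ∀ x : EuclideanSpace ℝ (Fin n), x ≠ 0 →
      Γ x = (((n : ℝ) - 2) * ω')⁻¹ * ‖x‖ ^ (2 - (n : ℝ))) :
    ∀ ω : EuclideanSpace ℝ (Fin n), ‖ω‖ = 1 →
      ∫ y, Γ (ω - y) * ‖y‖ ^ ((2 * s - q * ((n : ℝ) - 2)) / (1 - s)) =
        (1 - s) ^ 2 / ((((n : ℝ) - 2) * q - 2) * ((n : ℝ) - ((n : ℝ) - 2) * (q + s))) := by
  intro ω hω
  have hn' : (3 : ℝ) ≤ n := by exact_mod_cast hn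
  have : Nontrivial (EuclideanSpace ℝ (Fin n)) :=
    ⟨ω, 0, fun h => by rw [h, norm_zero] at hω; norm_num at hω⟩
  have hn2 : (0:ℝ) < n - 2 := by linarith
  have h1s : 0 < 1 - s := by linarith
  rw [div_lt_iff₀ hn2] at hq
  rw [lt_div_iff₀ hn2] at hqs
  obtain ⟨B, hB⟩ : ∃ B : ℝ, B = (q * ((n : ℝ) - 2) - 2 * s) / (1 - s) / 2 := ⟨_, rfl⟩
  have hexp : (2 * s - q * ((n : ℝ) - 2)) / (1 - s) = -2 * B := by
    rw [hB]; field_simp; ring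
  have hBa : B - 1 = (((n : ℝ) - 2) * q - 2) / (2 * (1 - s)) := by
    rw [hB]; field_simp; ring
  have hBb : (n : ℝ) / 2 - B = ((n : ℝ) - ((n : ℝ) - 2) * (q + s)) / (2 * (1 - s)) := by
    rw [hB]; field_simp; ring
  have hp1 : 0 < ((n : ℝ) - 2) * q - 2 := by linarith
  have hp2 : 0 < (n : ℝ) - ((n : ℝ) - 2) * (q + s) := by linarith
  have hB1 : 0 < B - 1 := by rw [hBa]; positivity
  have hB2 : 0 < (n : ℝ) / 2 - B := by rw [hBb]; positivity
  have hA0 : 0 < (n : ℝ) / 2 - 1 := by linarith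
  have hGA := Real.Gamma_pos_of_pos hA0
  have hGB := Real.Gamma_pos_of_pos (show 0 < B by linarith)
  have hGB1 := Real.Gamma_pos_of_pos hB1
  have hGBr : Real.Gamma B = (B - 1) * Real.Gamma (B - 1) := by
    have := Real.Gamma_add_one hB1.ne'
    rwa [sub_add_cancel] at this
  have key := main_aux n hn B (by linarith) (by linarith) ω hω
  have hint : ∫ y, Real.Gamma ((n : ℝ) / 2 - 1) * Real.Gamma B *
        (‖ω - y‖ ^ (2 - (n : ℝ)) * ‖y‖ ^ (-2 * B)) =
      Real.pi ^ ((n : ℝ) / 2) * Real.Gamma (B - 1) * (1 / ((n : ℝ) / 2 - B)) := by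
    rw [integral_eq_lintegral_of_nonneg_ae, key, ENNReal.toReal_ofReal (by positivity)]
    · filter_upwards with y
      simp only [Pi.zero_apply]
      positivity
    · apply Measurable.aestronglyMeasurable
      fun_prop
  rw [integral_const_mul] at hint
  have hball : ω' = n * (Real.pi ^ ((n : ℝ) / 2) /
      ((n : ℝ) / 2 * (((n : ℝ) / 2 - 1) * Real.Gamma ((n : ℝ) / 2 - 1)))) := by
    have g1 := Real.Gamma_add_one hA0.ne'
    rw [sub_add_cancel] at g1
    have g2 := Real.Gamma_add_one (show (n : ℝ) / 2 ≠ 0 by positivity)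
    have : Nonempty (Fin n) := ⟨⟨0, by omega⟩⟩
    rw [hω', EuclideanSpace.volume_ball, Fintype.card_fin, ENNReal.ofReal_one, one_pow, one_mul,
      ENNReal.toReal_ofReal (div_nonneg (by positivity)
        (Real.Gamma_pos_of_pos (by positivity)).le), g2, g1, Real.sqrt_eq_rpow,
      ← Real.rpow_natCast, ← Real.rpow_mul Real.pi_pos.le, one_div_mul_eq_div]
  have hcong : ∫ y, Γ (ω - y) * ‖y‖ ^ ((2 * s - q * ((n : ℝ) - 2)) / (1 - s)) =
      ∫ y, (((n : ℝ) - 2) * ω')⁻¹ * (‖ω - y‖ ^ (2 - (n : ℝ)) * ‖y‖ ^ (-2 * B)) := by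
    apply integral_congr_ae
    filter_upwards [compl_mem_ae_iff.2 (measure_singleton (μ := volume) ω)] with y h1
    rw [hΓ _ (sub_ne_zero.2 (fun h => h1 h.symm)), hexp, mul_assoc]
  rw [hcong, integral_const_mul]
  have hI : ∫ y, (‖ω - y‖ ^ (2 - (n : ℝ)) * ‖y‖ ^ (-2 * B)) =
      Real.pi ^ ((n : ℝ) / 2) / (Real.Gamma ((n : ℝ) / 2 - 1) * (B - 1) * ((n : ℝ) / 2 - B)) := by
    rw [hGBr] at hint
    rw [eq_div_iff (by positivity)]
    have h3 := hB2.ne'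
    apply mul_left_cancel₀ hGB1.ne'
    rw [mul_one_div, eq_div_iff h3] at hint
    linarith
  rw [hI, hball, hBa, hBb]
  have hpi : Real.pi ^ ((n : ℝ) / 2) ≠ 0 := (Real.rpow_pos_of_pos Real.pi_pos _).ne'
  have hn0 : (n : ℝ) ≠ 0 := by positivity
  rw [show (n : ℝ) / 2 - 1 = ((n : ℝ) - 2) / 2 by ring] at hGA ⊢
  generalize Real.Gamma (((n : ℝ) - 2) / 2) = G at *
  have := hp1.ne'
  have := hp2.ne'
  field_simp
end

section
/- Let n ≥ 3, q > 2/(n-2), s ∈ [0,1), q + s < n/(n-2). Suppose u, v : ℝⁿ → (0,∞) are continuous, ℓ_u := lim_{|x|→∞} |x|^{n-2} u(x) and ℓ_v := lim_{|x|→∞} |x|^{((n-2)q-2)/(1-s)} v(x) exist in (0,∞), and v(x) = ∫ Γ(x-y) u(y)^q v(y)^s dy for all x. Then ℓ_u^q ℓ_v^{s-1} = ((n-2)q - 2)(n - (n-2)(q+s)) / (1-s)². -/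
open MeasureTheory Filter

lemma lint_gamma {a r : ℝ} (ha : 0 < a) (hr : 0 < r) :
    ∫⁻ t in Set.Ioi (0:ℝ), ENNReal.ofReal (t ^ (a-1) * Real.exp (-(r*t)))
      = ENNReal.ofReal ((1/r)^a * Real.Gamma a) := by
  have h := Real.integral_rpow_mul_exp_neg_mul_Ioi ha hr
  have hpos : 0 < (1/r)^a * Real.Gamma a := by
    have := Real.Gamma_pos_of_pos ha
    positivity
  rw [← h, ofReal_integral_eq_lintegral_ofReal]
  · by_contra hc
    have := integral_undef hc
    rw [h] at this
    exact hpos.ne' this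
  · filter_upwards [ae_restrict_mem measurableSet_Ioi] with t ht
    have : (0:ℝ) < t := ht
    simp only [Pi.zero_apply]
    positivity

lemma lint_gauss {n : ℕ} (w : EuclideanSpace ℝ (Fin n)) (hw : ‖w‖ = 1) {t l : ℝ} (ht : 0 < t)
    (hl : 0 < l) :
    ∫⁻ z : EuclideanSpace ℝ (Fin n), ENNReal.ofReal (Real.exp (-(t * (‖w - z‖^2 + l * ‖z‖^2))))
      = ENNReal.ofReal ((Real.pi / (t * (1+l))) ^ ((n:ℝ)/2) * Real.exp (-(l/(1+l) * t))) := by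
  have hb : 0 < t * (1+l) := by positivity
  have h := GaussianFourier.integral_rexp_neg_mul_sq_norm (V := EuclideanSpace ℝ (Fin n)) hb
  rw [finrank_euclideanSpace_fin] at h
  have hint : Integrable (fun z : EuclideanSpace ℝ (Fin n) => Real.exp (-(t * (1+l)) * ‖z‖^2)) := by
    by_contra hc
    have := integral_undef hc
    rw [h] at this
    have hp : 0 < (Real.pi / (t * (1+l))) ^ ((n:ℝ)/2) := by positivity
    exact hp.ne' this
  have key : ∀ z : EuclideanSpace ℝ (Fin n), Real.exp (-(t * (‖w - z‖^2 + l * ‖z‖^2)))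
     = Real.exp (-(t * (1+l)) * ‖z - (1/(1+l)) • w‖^2) * Real.exp (-(l/(1+l) * t)) := by
    intro z
    rw [← Real.exp_add]
    congr 1
    rw [norm_sub_sq_real, norm_sub_sq_real, inner_smul_right, norm_smul, mul_pow, hw,
      real_inner_comm z w]
    simp only [Real.norm_eq_abs, sq_abs]
    field_simp
    ring
  simp_rw [key]
  rw [← ofReal_integral_eq_lintegral_ofReal]
  · rw [integral_mul_const]
    rw [integral_sub_right_eq_self (fun z : EuclideanSpace ℝ (Fin n) => Real.exp (-(t * (1+l)) * ‖z‖^2)), h]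
  · exact (hint.comp_sub_right _).mul_const _
  · exact Filter.Eventually.of_forall fun z => by simp only [Pi.zero_apply]; positivity

lemma lint_pow {c : ℝ} (hc : c < -1) :
    ∫⁻ l in Set.Ioi (0:ℝ), ENNReal.ofReal ((1+l)^c) = ENNReal.ofReal (-1/(c+1)) := by
  have h1 := integral_Ioi_rpow_of_lt hc (c := 1) one_pos
  have h2 := integrableOn_Ioi_rpow_of_lt hc (c := 1) one_pos
  have e : ∫⁻ l in Set.Ioi (0:ℝ), ENNReal.ofReal ((1+l)^c) = ∫⁻ l in Set.Ioi (1:ℝ), ENNReal.ofReal (l^c) := by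
    have := (measurePreserving_add_left volume (1:ℝ)).setLIntegral_comp_preimage_emb
      (measurableEmbedding_addLeft 1) (fun l => ENNReal.ofReal (l^c)) (Set.Ioi 1)
    rw [← this]
    simp
  rw [e, ← ofReal_integral_eq_lintegral_ofReal h2, h1]
  · simp
  · filter_upwards [ae_restrict_mem measurableSet_Ioi] with t ht
    have : (0:ℝ) < t := lt_trans one_pos ht
    simp only [Pi.zero_apply]
    positivity


set_option maxHeartbeats 2000000 in
lemma riesz_lint {n : ℕ} (hn : 3 ≤ n) (w : EuclideanSpace ℝ (Fin n)) (hw : ‖w‖ = 1) {r : ℝ}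
    (hr1 : 1 < r) (hr2 : r < (n:ℝ)/2) :
    ∫⁻ z : EuclideanSpace ℝ (Fin n),
      ENNReal.ofReal (‖w - z‖ ^ (2 - (n:ℝ)) * ‖z‖ ^ (-(2 * r)) *
        (Real.Gamma ((n:ℝ)/2 - 1) * Real.Gamma r))
     = ENNReal.ofReal (Real.pi ^ ((n:ℝ)/2) * Real.Gamma (r-1) / ((n:ℝ)/2 - r)) := by
  have hn' : (3:ℝ) ≤ n := by exact_mod_cast hn
  have hne : Nontrivial (EuclideanSpace ℝ (Fin n)) := by
    refine ⟨w, 0, fun h => ?_⟩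
    rw [h] at hw; simp at hw
  let F : ℝ → ℝ → EuclideanSpace ℝ (Fin n) → ENNReal := fun l t z =>
    ENNReal.ofReal (t ^ ((n:ℝ)/2 - 2 + r) * l ^ (r-1) *
      Real.exp (-(t * (‖w - z‖^2 + l * ‖z‖^2))))
  have hF : Measurable (fun x : ℝ × ℝ × EuclideanSpace ℝ (Fin n) => F x.1 x.2.1 x.2.2) := by
    simp only [F]
    fun_prop
  have step1 : ∀ᵐ z : EuclideanSpace ℝ (Fin n),
      ENNReal.ofReal (‖w - z‖ ^ (2 - (n:ℝ)) * ‖z‖ ^ (-(2 * r)) *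
        (Real.Gamma ((n:ℝ)/2 - 1) * Real.Gamma r))
      = ∫⁻ t in Set.Ioi (0:ℝ), ∫⁻ l in Set.Ioi (0:ℝ), F l t z := by
    have h0 : ∀ᵐ z : EuclideanSpace ℝ (Fin n), z ≠ 0 := Measure.ae_ne volume 0
    have h1 : ∀ᵐ z : EuclideanSpace ℝ (Fin n), z ≠ w := Measure.ae_ne volume w
    filter_upwards [h0, h1] with z hz0 hzw
    have hz : 0 < ‖z‖ := norm_pos_iff.2 hz0
    have hwz : 0 < ‖w - z‖ := norm_pos_iff.2 (sub_ne_zero.2 (Ne.symm hzw))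
    have hG1 : 0 < Real.Gamma r := Real.Gamma_pos_of_pos (by linarith)
    have hG2 : 0 < Real.Gamma ((n:ℝ)/2-1) := Real.Gamma_pos_of_pos (by linarith)
    have inner : ∀ t ∈ Set.Ioi (0:ℝ), ∫⁻ l in Set.Ioi (0:ℝ), F l t z
        = ENNReal.ofReal (‖z‖ ^ (-(2 * r)) * Real.Gamma r) *
          ENNReal.ofReal (t ^ ((n:ℝ)/2-1-1) * Real.exp (-(‖w - z‖^2 * t))) := by
      intro t ht
      have ht : 0 < t := ht
      have := lint_gamma (a := r) (r := t * ‖z‖^2) (by linarith) (by positivity)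
      calc _ = ∫⁻ l in Set.Ioi (0:ℝ), ENNReal.ofReal (t ^ ((n:ℝ)/2-2+r) * Real.exp (-(‖w - z‖^2 * t)))
              * ENNReal.ofReal (l ^ (r-1) * Real.exp (-(t * ‖z‖^2 * l))) := by
            refine setLIntegral_congr_fun measurableSet_Ioi fun l hl => ?_
            simp only [F]
            rw [← ENNReal.ofReal_mul (by positivity)]
            congr 1
            rw [show -(t * (‖w - z‖^2 + l * ‖z‖^2)) = -(‖w - z‖^2 * t) + -(t * ‖z‖^2 * l) by ring,
              Real.exp_add]
            ring
        _ = _ := by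
            rw [lintegral_const_mul' _ _ ENNReal.ofReal_ne_top, this,
              ← ENNReal.ofReal_mul (by positivity), ← ENNReal.ofReal_mul (by positivity)]
            congr 1
            rw [one_div, Real.inv_rpow (by positivity), Real.mul_rpow ht.le (by positivity),
              Real.rpow_add ht, ← Real.rpow_natCast ‖z‖ 2, ← Real.rpow_mul hz.le,
              Real.rpow_neg hz.le, show (n:ℝ)/2-1-1 = (n:ℝ)/2-2 by ring]
            push_cast
            have : t ^ r ≠ 0 := (Real.rpow_pos_of_pos ht r).ne'
            field_simp
    rw [setLIntegral_congr_fun measurableSet_Ioi inner,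
      lintegral_const_mul' _ _ ENNReal.ofReal_ne_top, lint_gamma (by linarith) (by positivity),
      ← ENNReal.ofReal_mul (by positivity)]
    congr 1
    rw [one_div, Real.inv_rpow (by positivity), ← Real.rpow_natCast ‖w - z‖ 2,
      ← Real.rpow_mul hwz.le, ← Real.rpow_neg hwz.le]
    push_cast
    rw [show -(2 * ((n:ℝ)/2-1)) = 2 - n by ring]
    ring
  rw [lintegral_congr_ae step1]
  have swap1 : ∫⁻ z, ∫⁻ t in Set.Ioi (0:ℝ), ∫⁻ l in Set.Ioi (0:ℝ), F l t z
      = ∫⁻ t in Set.Ioi (0:ℝ), ∫⁻ l in Set.Ioi (0:ℝ), ∫⁻ z, F l t z := by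
    rw [lintegral_lintegral_swap]
    · refine lintegral_congr fun t => ?_
      rw [lintegral_lintegral_swap]
      apply Measurable.aemeasurable
      exact hF.comp (by fun_prop : Measurable fun p : EuclideanSpace ℝ (Fin n) × ℝ => (p.2, t, p.1))
    · apply Measurable.aemeasurable
      refine Measurable.lintegral_prod_right' 
        (f := fun p : (EuclideanSpace ℝ (Fin n) × ℝ) × ℝ => F p.2 p.1.2 p.1.1) ?_
      exact hF.comp (by fun_prop : Measurable fun p : (EuclideanSpace ℝ (Fin n) × ℝ) × ℝ => (p.2, p.1.2, p.1.1))
  have swap2 : ∫⁻ t in Set.Ioi (0:ℝ), ∫⁻ l in Set.Ioi (0:ℝ), ∫⁻ z, F l t z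
      = ∫⁻ l in Set.Ioi (0:ℝ), ∫⁻ t in Set.Ioi (0:ℝ), ∫⁻ z, F l t z := by
    rw [lintegral_lintegral_swap]
    apply Measurable.aemeasurable
    refine Measurable.lintegral_prod_right' 
        (f := fun p : (ℝ × ℝ) × EuclideanSpace ℝ (Fin n) => F p.1.2 p.1.1 p.2) ?_
    exact hF.comp (by fun_prop : Measurable fun p : (ℝ × ℝ) × EuclideanSpace ℝ (Fin n) => (p.1.2, p.1.1, p.2))
  rw [swap1, swap2]
  have hG3 : 0 < Real.Gamma (r-1) := Real.Gamma_pos_of_pos (by linarith)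
  have inner2 : ∀ l ∈ Set.Ioi (0:ℝ), ∫⁻ t in Set.Ioi (0:ℝ), ∫⁻ z, F l t z
      = ENNReal.ofReal (Real.pi ^ ((n:ℝ)/2) * Real.Gamma (r-1)) *
          ENNReal.ofReal ((1+l) ^ (r - 1 - (n:ℝ)/2)) := by
    intro l hl
    have hl : 0 < l := hl
    have hl1 : 0 < 1 + l := by linarith
    calc _ = ∫⁻ t in Set.Ioi (0:ℝ), ENNReal.ofReal (l ^ (r-1) * (Real.pi / (1+l)) ^ ((n:ℝ)/2)) *
              ENNReal.ofReal (t ^ (r-1-1) * Real.exp (-(l/(1+l) * t))) := by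
          refine setLIntegral_congr_fun measurableSet_Ioi fun t ht => ?_
          have ht : 0 < t := ht
          simp only [F]
          have : ∀ z : EuclideanSpace ℝ (Fin n), ENNReal.ofReal (t ^ ((n:ℝ)/2 - 2 + r) * l ^ (r-1) *
              Real.exp (-(t * (‖w - z‖^2 + l * ‖z‖^2)))) =
            ENNReal.ofReal (t ^ ((n:ℝ)/2 - 2 + r) * l ^ (r-1)) *
              ENNReal.ofReal (Real.exp (-(t * (‖w - z‖^2 + l * ‖z‖^2)))) := fun z =>
            ENNReal.ofReal_mul (by positivity)
          simp_rw [this]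
          rw [lintegral_const_mul' _ _ ENNReal.ofReal_ne_top, lint_gauss w hw ht hl,
            ← ENNReal.ofReal_mul (by positivity), ← ENNReal.ofReal_mul (by positivity)]
          congr 1
          rw [Real.div_rpow Real.pi_pos.le (by positivity), Real.mul_rpow ht.le hl1.le,
            Real.div_rpow Real.pi_pos.le (by positivity),
            show (n:ℝ)/2 - 2 + r = (n:ℝ)/2 + (r-1-1) by ring, Real.rpow_add ht]
          have : t ^ ((n:ℝ)/2) ≠ 0 := (Real.rpow_pos_of_pos ht _).ne'
          field_simp
      _ = _ := by
          rw [lintegral_const_mul' _ _ ENNReal.ofReal_ne_top,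
            lint_gamma (by linarith) (by positivity),
            ← ENNReal.ofReal_mul (by positivity), ← ENNReal.ofReal_mul (by positivity)]
          congr 1
          rw [one_div_div, Real.div_rpow Real.pi_pos.le (by positivity),
            Real.div_rpow hl1.le hl.le, Real.rpow_sub hl1 (r-1) ((n:ℝ)/2)]
          have : l ^ (r-1) ≠ 0 := (Real.rpow_pos_of_pos hl _).ne'
          field_simp
  rw [setLIntegral_congr_fun measurableSet_Ioi inner2,
      lintegral_const_mul' _ _ ENNReal.ofReal_ne_top, lint_pow (by linarith),
      ← ENNReal.ofReal_mul (by positivity)]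
  congr 1
  rw [show r - 1 - (n:ℝ)/2 + 1 = -((n:ℝ)/2 - r) by ring, neg_div_neg_eq]
  ring

lemma riesz_int {n : ℕ} (hn : 3 ≤ n) (w : EuclideanSpace ℝ (Fin n)) (hw : ‖w‖ = 1) {a : ℝ}
    (ha1 : 0 < a) (ha2 : a < (n:ℝ) - 2) :
    Integrable (fun z : EuclideanSpace ℝ (Fin n) => ‖w - z‖ ^ (2 - (n:ℝ)) * ‖z‖ ^ (-(a+2))) ∧
    ∫ z : EuclideanSpace ℝ (Fin n), ‖w - z‖ ^ (2 - (n:ℝ)) * ‖z‖ ^ (-(a+2)) =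
      ((n:ℝ) - 2) * (n * (volume (Metric.ball (0 : EuclideanSpace ℝ (Fin n)) 1)).toReal)
        / (a * ((n:ℝ) - 2 - a)) := by
  have hn' : (3:ℝ) ≤ n := by exact_mod_cast hn
  have h := riesz_lint hn w hw (r := (a+2)/2) (by linarith) (by linarith)
  set C := Real.Gamma ((n:ℝ)/2 - 1) * Real.Gamma ((a+2)/2) with hC
  have hG1 : 0 < Real.Gamma ((a+2)/2) := Real.Gamma_pos_of_pos (by linarith)
  have hG2 : 0 < Real.Gamma ((n:ℝ)/2-1) := Real.Gamma_pos_of_pos (by linarith)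
  have hG3 : 0 < Real.Gamma (a/2) := Real.Gamma_pos_of_pos (by linarith)
  have hCpos : 0 < C := by positivity
  rw [show 2 * ((a+2)/2) = a+2 by ring, show (a+2)/2-1 = a/2 by ring,
    show (n:ℝ)/2 - (a+2)/2 = ((n:ℝ) - 2 - a)/2 by ring] at h
  have hd : 0 < (n:ℝ) - 2 - a := by linarith
  have hmeas : Measurable (fun z : EuclideanSpace ℝ (Fin n) =>
      ‖w - z‖ ^ (2 - (n:ℝ)) * ‖z‖ ^ (-(a+2)) * C) := by fun_prop
  have hnn : ∀ z : EuclideanSpace ℝ (Fin n), 0 ≤ ‖w - z‖ ^ (2 - (n:ℝ)) * ‖z‖ ^ (-(a+2)) * C :=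
    fun z => by positivity
  have hI : Integrable (fun z : EuclideanSpace ℝ (Fin n) =>
      ‖w - z‖ ^ (2 - (n:ℝ)) * ‖z‖ ^ (-(a+2)) * C) := by
    refine (lintegral_ofReal_ne_top_iff_integrable hmeas.aestronglyMeasurable
      (Eventually.of_forall hnn)).1 ?_
    rw [h]; exact ENNReal.ofReal_ne_top
  refine ⟨?_, ?_⟩
  · have := hI.mul_const C⁻¹
    refine this.congr (Eventually.of_forall fun z => ?_)
    simp only
    field_simp
  · have e := integral_eq_lintegral_of_nonneg_ae (μ := volume) (Eventually.of_forall hnn) hmeas.aestronglyMeasurable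
    rw [h, integral_mul_const, ENNReal.toReal_ofReal (by positivity)] at e
    have e2 := eq_div_of_mul_eq hCpos.ne' e
    rw [e2, hC, show (a+2)/2 = a/2+1 by ring, Real.Gamma_add_one (by positivity)]
    haveI : Nonempty (Fin n) := ⟨⟨0, by omega⟩⟩
    rw [EuclideanSpace.volume_ball]
    have g2 : Real.Gamma ((n:ℝ)/2+1) = (n:ℝ)/2 * (((n:ℝ)/2-1) * Real.Gamma ((n:ℝ)/2-1)) := by
      rw [Real.Gamma_add_one (by positivity)]
      congr 1
      rw [← Real.Gamma_add_one (by linarith)]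
      congr 1; ring
    have hpi : √Real.pi ^ n = Real.pi ^ ((n:ℝ)/2) := by
      rw [Real.sqrt_eq_rpow, ← Real.rpow_natCast, ← Real.rpow_mul Real.pi_pos.le]
      congr 1; ring
    have hn2 : (n:ℝ) - 2 ≠ 0 := by linarith
    simp only [Fintype.card_fin, ENNReal.ofReal_one, one_pow, one_mul]
    have hG4 : 0 < Real.Gamma ((n:ℝ)/2+1) := Real.Gamma_pos_of_pos (by linarith)
    rw [ENNReal.toReal_ofReal (by positivity), g2, hpi,
      show (n:ℝ)/2 - 1 = ((n:ℝ)-2)/2 by ring]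
    rw [show (n:ℝ)/2 - 1 = ((n:ℝ)-2)/2 by ring] at hG2
    have : (n:ℝ) ≠ 0 := by linarith
    field_simp
    try ring

theorem stmt_19 (n : ℕ) (hn : 3 ≤ n) (q s : ℝ)
    (hq : 2 / ((n : ℝ) - 2) < q) (hs0 : 0 ≤ s) (hs1 : s < 1)
    (hqs : q + s < (n : ℝ) / (n - 2))
    (ω' : ℝ)
    (hω' : ω' = n * (volume (Metric.ball (0 : EuclideanSpace ℝ (Fin n)) 1)).toReal)
    (Γ : EuclideanSpace ℝ (Fin n) → ℝ)
    (hΓ : ∀ x : EuclideanSpace ℝ (Fin n), x ≠ 0 →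
      Γ x = (((n : ℝ) - 2) * ω')⁻¹ * ‖x‖ ^ (2 - (n : ℝ)))
    (u v : EuclideanSpace ℝ (Fin n) → ℝ)
    (hucont : Continuous u) (hvcont : Continuous v)
    (hupos : ∀ x, 0 < u x) (hvpos : ∀ x, 0 < v x)
    (lu lv : ℝ) (hlu : 0 < lu) (hlv : 0 < lv)
    (hulim : Tendsto (fun x : EuclideanSpace ℝ (Fin n) => ‖x‖ ^ ((n : ℝ) - 2) * u x)
      (cocompact (EuclideanSpace ℝ (Fin n))) (nhds lu))
    (hvlim : Tendsto (fun x : EuclideanSpace ℝ (Fin n) =>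
        ‖x‖ ^ ((((n : ℝ) - 2) * q - 2) / (1 - s)) * v x)
      (cocompact (EuclideanSpace ℝ (Fin n))) (nhds lv))
    (hvrep : ∀ x, v x = ∫ y, Γ (x - y) * (u y ^ q * v y ^ s)) :
    lu ^ q * lv ^ (s - 1) =
      (((n : ℝ) - 2) * q - 2) * ((n : ℝ) - ((n : ℝ) - 2) * (q + s)) / (1 - s) ^ 2 := by
  have hn' : (3:ℝ) ≤ n := by exact_mod_cast hn
  have hn2 : 0 < (n:ℝ) - 2 := by linarith
  have h1s : 0 < 1 - s := by linarith
  set a := (((n : ℝ) - 2) * q - 2) / (1 - s) with ha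
  have haeq : a * (1 - s) = ((n : ℝ) - 2) * q - 2 := by rw [ha]; field_simp
  have hq' : 2 < ((n:ℝ) - 2) * q := by
    rw [div_lt_iff₀ hn2] at hq; linarith
  have hq0 : 0 < q := by
    by_contra h
    push Not at h
    nlinarith
  have hqs' : (q + s) * ((n:ℝ) - 2) < n := by rwa [lt_div_iff₀ hn2] at hqs
  have ha1 : 0 < a := div_pos (by linarith) h1s
  have ha2 : a < (n:ℝ) - 2 := by
    rw [ha, div_lt_iff₀ h1s]; nlinarith
  have hrhs : (((n : ℝ) - 2) * q - 2) * ((n : ℝ) - ((n : ℝ) - 2) * (q + s)) / (1 - s) ^ 2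
      = a * ((n:ℝ) - 2 - a) := by
    have : (n : ℝ) - ((n : ℝ) - 2) * (q + s) = (1 - s) * ((n:ℝ) - 2 - a) := by linarith
    rw [this, ← haeq]
    field_simp
  rw [hrhs]
  set f : EuclideanSpace ℝ (Fin n) → ℝ := fun y => u y ^ q * v y ^ s with hf
  have hfpos : ∀ y, 0 < f y := fun y =>
    mul_pos (Real.rpow_pos_of_pos (hupos y) _) (Real.rpow_pos_of_pos (hvpos y) _)
  have hfcont : Continuous f :=
    (hucont.rpow_const fun x => Or.inl (hupos x).ne').mul
      (hvcont.rpow_const fun x => Or.inl (hvpos x).ne')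
  set L := lu ^ q * lv ^ s with hL
  have hgeq : ∀ y : EuclideanSpace ℝ (Fin n),
      ‖y‖ ^ (a+2) * f y = (‖y‖ ^ ((n:ℝ)-2) * u y) ^ q * (‖y‖ ^ a * v y) ^ s := by
    intro y
    rw [Real.mul_rpow (by positivity) (hupos y).le, Real.mul_rpow (by positivity) (hvpos y).le,
      ← Real.rpow_mul (norm_nonneg _), ← Real.rpow_mul (norm_nonneg _),
      show a + 2 = ((n:ℝ)-2)*q + a * s by linarith,
      Real.rpow_add_of_nonneg (norm_nonneg _) (by linarith) (by positivity)]
    simp only [hf]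
    ring
  have hglim : Tendsto (fun y : EuclideanSpace ℝ (Fin n) => ‖y‖ ^ (a+2) * f y)
      (cocompact (EuclideanSpace ℝ (Fin n))) (nhds L) := by
    simp_rw [hgeq]
    exact (hulim.rpow_const (Or.inl hlu.ne')).mul (hvlim.rpow_const (Or.inl hlv.ne'))
  have hgcont : Continuous (fun y : EuclideanSpace ℝ (Fin n) => ‖y‖ ^ (a+2) * f y) :=
    (continuous_norm.rpow_const fun x => Or.inr (by linarith)).mul hfcont
  obtain ⟨M, hM⟩ : ∃ M, ∀ y : EuclideanSpace ℝ (Fin n), ‖y‖ ^ (a+2) * f y ≤ M := by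
    have h1 := hglim.eventually (gt_mem_nhds (lt_add_one L))
    obtain ⟨K, hK, hKs⟩ := mem_cocompact.1 h1
    obtain ⟨B, hB⟩ := hK.exists_bound_of_continuousOn hgcont.continuousOn
    refine ⟨max B (L+1), fun y => ?_⟩
    by_cases hy : y ∈ K
    · exact le_trans (le_trans (le_abs_self _) (hB y hy)) (le_max_left _ _)
    · have : ‖y‖ ^ (a+2) * f y < L + 1 := hKs hy
      exact le_trans this.le (le_max_right _ _)
  -- unit vector
  haveI : Nonempty (Fin n) := ⟨⟨0, by omega⟩⟩
  let w : EuclideanSpace ℝ (Fin n) := EuclideanSpace.single ⟨0, by omega⟩ 1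
  have hw : ‖w‖ = 1 := by simp [w]
  obtain ⟨hI, hIval⟩ := riesz_int hn w hw ha1 ha2
  have hω'pos : 0 < ω' := by
    rw [hω']
    refine mul_pos (by linarith) (ENNReal.toReal_pos ?_ ?_)
    · exact (Metric.measure_ball_pos volume _ one_pos).ne'
    · exact measure_ball_lt_top.ne
  set c := (((n : ℝ) - 2) * ω')⁻¹ with hc
  have hcpos : 0 < c := by positivity
  have hscale : ∀ R : ℝ, 0 < R → R ^ a * v (R • w) =
      ∫ z, c * ‖w - z‖ ^ (2 - (n:ℝ)) * (R ^ (a+2) * f (R • z)) := by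
    intro R hR
    have h1 := Measure.integral_comp_smul (volume : Measure (EuclideanSpace ℝ (Fin n)))
      (fun y => Γ (R • w - y) * f y) R
    rw [← hvrep, finrank_euclideanSpace_fin, abs_of_pos (by positivity), smul_eq_mul] at h1
    have h2 : v (R • w) = R ^ n * ∫ z, Γ (R • w - R • z) * f (R • z) := by
      rw [h1]; field_simp
    rw [h2, ← mul_assoc, ← integral_const_mul]
    refine integral_congr_ae ?_
    have h0 : ∀ᵐ z : EuclideanSpace ℝ (Fin n), z ≠ w := Measure.ae_ne volume w
    filter_upwards [h0] with z hz
    have hwz : w - z ≠ 0 := sub_ne_zero.2 (Ne.symm hz)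
    rw [← smul_sub, hΓ _ (smul_ne_zero hR.ne' hwz), norm_smul, Real.norm_of_nonneg hR.le,
      Real.mul_rpow hR.le (norm_nonneg _), Real.rpow_sub hR, Real.rpow_natCast, Real.rpow_add hR]
    field_simp
  have hcoc : ∀ z : EuclideanSpace ℝ (Fin n), z ≠ 0 →
      Tendsto (fun R : ℝ => R • z) atTop (cocompact (EuclideanSpace ℝ (Fin n))) := by
    intro z hz
    rw [← Metric.cobounded_eq_cocompact, ← tendsto_norm_atTop_iff_cobounded]
    simp_rw [norm_smul]
    exact (tendsto_norm_atTop_atTop).atTop_mul_const (norm_pos_iff.2 hz)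
  have hw0 : w ≠ 0 := by
    intro h; rw [h] at hw; simp at hw
  have hlim1 : Tendsto (fun R : ℝ => R ^ a * v (R • w)) atTop (nhds lv) := by
    refine (hvlim.comp (hcoc w hw0)).congr' ?_
    filter_upwards [eventually_gt_atTop 0] with R hR
    simp [norm_smul, hw, abs_of_pos hR]
  have hlim2 : Tendsto (fun R : ℝ => ∫ z, c * ‖w - z‖ ^ (2 - (n:ℝ)) * (R ^ (a+2) * f (R • z)))
      atTop (nhds (∫ z, c * ‖w - z‖ ^ (2 - (n:ℝ)) * (L * ‖z‖ ^ (-(a+2))))) := by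
    have h0 : ∀ᵐ z : EuclideanSpace ℝ (Fin n), z ≠ 0 := Measure.ae_ne volume 0
    have heq : ∀ z : EuclideanSpace ℝ (Fin n), z ≠ 0 → ∀ R : ℝ, 0 < R →
        R ^ (a+2) * f (R • z) = (‖R • z‖ ^ (a+2) * f (R • z)) * ‖z‖ ^ (-(a+2)) := by
      intro z hz R hR
      have hz' : 0 < ‖z‖ := norm_pos_iff.2 hz
      rw [norm_smul, Real.norm_of_nonneg hR.le, Real.mul_rpow hR.le hz'.le, Real.rpow_neg hz'.le]
      have : ‖z‖ ^ (a+2) ≠ 0 := (Real.rpow_pos_of_pos hz' _).ne'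
      field_simp
    refine tendsto_integral_filter_of_dominated_convergence
      (fun z => c * M * (‖w - z‖ ^ (2 - (n:ℝ)) * ‖z‖ ^ (-(a+2)))) ?_ ?_ (hI.const_mul _) ?_
    · refine Eventually.of_forall fun R => ?_
      apply Measurable.aestronglyMeasurable
      have := hfcont.measurable
      fun_prop
    · filter_upwards [eventually_gt_atTop 0] with R hR
      filter_upwards [h0] with z hz
      have hp := hfpos (R • z)
      rw [Real.norm_of_nonneg (by positivity), heq z hz R hR]
      have := hM (R • z)
      calc _ = c * (‖w - z‖ ^ (2 - (n:ℝ)) * ‖z‖ ^ (-(a+2))) * (‖R • z‖ ^ (a+2) * f (R • z)) := by ring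
        _ ≤ c * (‖w - z‖ ^ (2 - (n:ℝ)) * ‖z‖ ^ (-(a+2))) * M := by gcongr
        _ = _ := by ring
    · filter_upwards [h0] with z hz
      refine Tendsto.const_mul _ ?_
      refine ((hglim.comp (hcoc z hz)).mul_const (‖z‖ ^ (-(a+2)))).congr' ?_
      filter_upwards [eventually_gt_atTop 0] with R hR
      exact (heq z hz R hR).symm
  have hlim3 := hlim2.congr' (f₂ := fun R : ℝ => R ^ a * v (R • w)) (by
    filter_upwards [eventually_gt_atTop 0] with R hR
    exact (hscale R hR).symm)
  have hfin := tendsto_nhds_unique hlim1 hlim3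
  have hval : ∫ z, c * ‖w - z‖ ^ (2 - (n:ℝ)) * (L * ‖z‖ ^ (-(a+2)))
      = L / (a * ((n:ℝ) - 2 - a)) := by
    have : ∀ z : EuclideanSpace ℝ (Fin n), c * ‖w - z‖ ^ (2 - (n:ℝ)) * (L * ‖z‖ ^ (-(a+2)))
        = c * L * (‖w - z‖ ^ (2 - (n:ℝ)) * ‖z‖ ^ (-(a+2))) := fun z => by ring
    simp_rw [this]
    rw [integral_const_mul, hIval, ← hω', hc]
    field_simp
  rw [hval] at hfin
  have hd : 0 < (n:ℝ) - 2 - a := by linarith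
  rw [eq_div_iff (by positivity)] at hfin
  rw [Real.rpow_sub hlv, Real.rpow_one, ← mul_div_assoc, ← hL, ← hfin]
  field_simp
end
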